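/- Variance estimate, diagonal part (Lemma 4.6, first part): fix θ with −√2 < θ < √2 and R ∈ ℕ. With x_θ^N = x/N + θ and T^N_{r,∞}(x) = { y ∈ ℝ : r/N ≤ |x_θ^N − y| }, one has lim_{r→∞} limsup_{N→∞} sup_{|x| < R} ∫_{T^N_{r,∞}(x)} L^N(y,y) / ( N |x_θ^N − y|² ) dy = 0. -/

import Mathlib

open Real MeasureTheory Filter Set

/-- Physicists' Hermite polynomial `H_n(x) = (-1)^n e^{x^2} (d/dx)^n e^{-x^2}`. -/
noncomputable def hermiteP (n : ℕ) (x : ℝ) : ℝ :=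
  (-1 : ℝ) ^ n * Real.exp (x ^ 2) * iteratedDeriv n (fun t => Real.exp (-t ^ 2)) x

/-- Oscillator wave function `ψ_n(x) = (√π 2^n n!)^{-1/2} e^{-x^2/2} H_n(x)`. -/
noncomputable def osc (n : ℕ) (x : ℝ) : ℝ :=
  (Real.sqrt (Real.sqrt Real.pi * 2 ^ n * (n.factorial : ℝ)))⁻¹ *
    Real.exp (-x ^ 2 / 2) * hermiteP n x

/-- The kernel `K^N(x,y) = Σ_{k=0}^{N-1} ψ_k(x) ψ_k(y)`. -/
noncomputable def kerK (N : ℕ) (x y : ℝ) : ℝ :=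
  ∑ k ∈ Finset.range N, osc k x * osc k y

/-- The rescaled kernel `L^N(x,y) = N^{-1/2} K^N(√N x, √N y)`. -/
noncomputable def kerL (N : ℕ) (x y : ℝ) : ℝ :=
  (Real.sqrt (N : ℝ))⁻¹ * kerK N (Real.sqrt (N : ℝ) * x) (Real.sqrt (N : ℝ) * y)

/-- Physicists' Hermite polynomials by recursion. -/
noncomputable def hPoly : ℕ → Polynomial ℝ
  | 0 => 1
  | n + 1 => 2 * Polynomial.X * hPoly n - Polynomial.derivative (hPoly n)

/-- Normalisation constants. -/
noncomputable def cN (n : ℕ) : ℝ :=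
  (Real.sqrt (Real.sqrt Real.pi * 2 ^ n * (n.factorial : ℝ)))⁻¹

/-- The ladder coefficient. -/
noncomputable def sN (n : ℕ) : ℝ := Real.sqrt (2 * ((n : ℝ) + 1))

lemma hPoly_derivative (n : ℕ) :
    Polynomial.derivative (hPoly (n + 1)) = 2 * ((n : Polynomial ℝ) + 1) * hPoly n := by
  induction n with
  | zero => simp [hPoly]
  | succ k ih =>
    have h1 : hPoly (k + 2) =
      2 * Polynomial.X * hPoly (k + 1) - Polynomial.derivative (hPoly (k + 1)) := rfl
    have h2 : hPoly (k + 1) =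
      2 * Polynomial.X * hPoly k - Polynomial.derivative (hPoly k) := rfl
    have h3 : Polynomial.derivative (2 * ((k : Polynomial ℝ) + 1) * hPoly k)
        = 2 * ((k : Polynomial ℝ) + 1) * Polynomial.derivative (hPoly k) := by
      simp [Polynomial.derivative_mul]
    rw [h1, Polynomial.derivative_sub, Polynomial.derivative_mul, ih, h3]
    simp only [Polynomial.derivative_mul, Polynomial.derivative_ofNat, Polynomial.derivative_X]
    push_cast
    have h4 : Polynomial.derivative (hPoly k) = 2 * Polynomial.X * hPoly k - hPoly (k + 1) := by
      rw [h2]; ring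
    rw [h4]; ring

lemma iteratedDeriv_gauss (n : ℕ) :
    iteratedDeriv n (fun t : ℝ => Real.exp (-t ^ 2)) =
      fun x => (-1 : ℝ) ^ n * (hPoly n).eval x * Real.exp (-x ^ 2) := by
  induction n with
  | zero => ext x; simp [hPoly]
  | succ k ih =>
    ext x
    rw [iteratedDeriv_succ, ih]
    have h0 : HasDerivAt (fun x : ℝ => -x ^ 2) (-(2 * x)) x := by
      convert! (hasDerivAt_pow 2 x).neg using 1
      simp
    have h := (((hPoly k).hasDerivAt x).const_mul ((-1 : ℝ) ^ k)).mul h0.exp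
    refine h.deriv.trans ?_
    simp only [hPoly, Polynomial.eval_sub, Polynomial.eval_mul, Polynomial.eval_X,
      Polynomial.eval_ofNat]
    ring

lemma osc_eq (n : ℕ) (x : ℝ) :
    osc n x = cN n * Real.exp (-x ^ 2 / 2) * (hPoly n).eval x := by
  have h : hermiteP n x = (hPoly n).eval x := by
    rw [hermiteP, iteratedDeriv_gauss]
    have h1 : ((-1 : ℝ) ^ n) * (-1) ^ n = 1 := by rw [← mul_pow]; simp
    have h2 : Real.exp (x ^ 2) * Real.exp (-x ^ 2) = 1 := by rw [← Real.exp_add]; simp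
    calc _ = (((-1 : ℝ) ^ n) * (-1) ^ n) * (Real.exp (x ^ 2) * Real.exp (-x ^ 2))
          * (hPoly n).eval x := by ring
      _ = _ := by rw [h1, h2]; ring
  rw [osc, h, cN]

lemma sN_pos (n : ℕ) : 0 < sN n := by unfold sN; positivity

lemma sN_sq (n : ℕ) : sN n * sN n = 2 * ((n : ℝ) + 1) := by
  unfold sN; exact Real.mul_self_sqrt (by positivity)

lemma cN_succ (n : ℕ) : cN n = sN n * cN (n + 1) := by
  have h : √(√π * 2 ^ (n + 1) * ((n + 1).factorial : ℝ))
      = sN n * √(√π * 2 ^ n * (n.factorial : ℝ)) := by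
    rw [sN, ← Real.sqrt_mul (by positivity), Nat.factorial_succ]
    congr 1; push_cast; ring
  have := sN_pos n
  rw [cN, cN, h, mul_inv, ← mul_assoc, mul_inv_cancel₀ this.ne', one_mul]

lemma osc_hasDerivAt (n : ℕ) (x : ℝ) :
    HasDerivAt (osc n) (x * osc n x - sN n * osc (n + 1) x) x := by
  have h0 : HasDerivAt (fun x : ℝ => -x ^ 2 / 2) (-x) x := by
    convert! ((hasDerivAt_pow 2 x).neg).div_const 2 using 1
    simp; ring
  have h := (h0.exp.const_mul (cN n)).mul ((hPoly n).hasDerivAt x)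
  have he : osc n = (fun x => cN n * Real.exp (-x ^ 2 / 2)) * fun x => (hPoly n).eval x := by
    ext y; simp [osc_eq]
  rw [← he] at h
  convert! h using 1
  rw [osc_eq, osc_eq, cN_succ n]
  simp only [hPoly, Polynomial.eval_sub, Polynomial.eval_mul, Polynomial.eval_X,
      Polynomial.eval_ofNat]
  ring

lemma osc_hasDerivAt_succ (n : ℕ) (x : ℝ) :
    HasDerivAt (osc (n + 1)) (sN n * osc n x - x * osc (n + 1) x) x := by
  have h0 : HasDerivAt (fun x : ℝ => -x ^ 2 / 2) (-x) x := by
    convert! ((hasDerivAt_pow 2 x).neg).div_const 2 using 1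
    simp; ring
  have h := (h0.exp.const_mul (cN (n + 1))).mul ((hPoly (n + 1)).hasDerivAt x)
  have he : osc (n + 1) = (fun x => cN (n + 1) * Real.exp (-x ^ 2 / 2)) *
      fun x => (hPoly (n + 1)).eval x := by
    ext y; simp [osc_eq]
  rw [← he] at h
  convert! h using 1
  rw [osc_eq, osc_eq, cN_succ n, hPoly_derivative]
  simp only [Polynomial.eval_mul, Polynomial.eval_add, Polynomial.eval_natCast,
      Polynomial.eval_one, Polynomial.eval_ofNat]
  rw [← sN_sq]
  ring

lemma integrable_poly_gauss (q : Polynomial ℝ) :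
    Integrable (fun x : ℝ => q.eval x * Real.exp (-x ^ 2)) := by
  induction q using Polynomial.induction_on' with
  | add p q hp hq =>
    simp only [Polynomial.eval_add, add_mul]
    exact hp.add hq
  | monomial n a =>
    have h := (integrable_rpow_mul_exp_neg_mul_sq (b := 1) one_pos
      (s := (n : ℝ)) (by have : (0 : ℝ) ≤ n := n.cast_nonneg
                         linarith)).const_mul a
    simp only [Real.rpow_natCast, neg_mul, one_mul] at h
    simpa [mul_assoc] using h

lemma osc_mul_integrable (m n : ℕ) : Integrable (fun x => osc m x * osc n x) := by
  have h := (integrable_poly_gauss (hPoly m * hPoly n)).const_mul (cN m * cN n)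
  refine h.congr (ae_of_all _ fun x => ?_)
  have h2 : Real.exp (-x ^ 2) = Real.exp (-x ^ 2 / 2) * Real.exp (-x ^ 2 / 2) := by
    rw [← Real.exp_add]; congr 1; ring
  simp only [osc_eq, Polynomial.eval_mul, h2]
  ring

lemma osc_norm (n : ℕ) : ∫ x, osc n x * osc n x = 1 := by
  induction n with
  | zero =>
    have h : ∀ x, osc 0 x * osc 0 x = (√π)⁻¹ * Real.exp (-1 * x ^ 2) := fun x => by
      have h2 : Real.exp (-1 * x ^ 2) = Real.exp (-x ^ 2 / 2) * Real.exp (-x ^ 2 / 2) := by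
        rw [← Real.exp_add]; congr 1; ring
      have h3 : cN 0 * cN 0 = (√π)⁻¹ := by
        rw [cN, ← mul_inv, Real.mul_self_sqrt (by positivity)]; simp
      rw [h2, ← h3, osc_eq]; simp [hPoly]; ring
    simp_rw [h]
    rw [integral_const_mul, integral_gaussian]
    simp
    exact inv_mul_cancel₀ (by positivity)
  | succ k ih =>
    have hd : ∀ x, HasDerivAt (osc k * osc (k + 1))
        (sN k * (osc k x * osc k x) - sN k * (osc (k + 1) x * osc (k + 1) x)) x := fun x => by
      convert! (osc_hasDerivAt k x).mul (osc_hasDerivAt_succ k x) using 1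
      ring
    have i1 := (osc_mul_integrable k k).const_mul (sN k)
    have i2 := (osc_mul_integrable (k + 1) (k + 1)).const_mul (sN k)
    have h := integral_eq_zero_of_hasDerivAt_of_integrable hd (i1.sub i2)
      (osc_mul_integrable k (k + 1))
    rw [integral_sub i1 i2, integral_const_mul, integral_const_mul, ih] at h
    have := sN_pos k
    have h' : sN k * (1 - ∫ x, osc (k + 1) x * osc (k + 1) x) = 0 := by linarith
    rcases mul_eq_zero.1 h' with h' | h' <;> linarith

lemma kerK_hasDerivAt (n : ℕ) (x : ℝ) :
    HasDerivAt (fun x => kerK (n + 1) x x) (-(sN n * (osc n x * osc (n + 1) x))) x := by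
  induction n with
  | zero =>
    have h1 := osc_hasDerivAt 0 x
    have h2 : HasDerivAt (osc 0) (-(x * osc 0 x)) x := by
      have h0 : HasDerivAt (fun x : ℝ => -x ^ 2 / 2) (-x) x := by
        convert! ((hasDerivAt_pow 2 x).neg).div_const 2 using 1
        simp; ring
      have h := h0.exp.const_mul (cN 0)
      have he : osc 0 = (fun x => cN 0 * Real.exp (-x ^ 2 / 2)) := by
        ext y; simp [osc_eq, hPoly]
      rw [← he] at h
      convert! h using 1
      rw [he]; ring
    have h := h1.mul h2
    have he : (fun x => kerK (0 + 1) x x) = osc 0 * osc 0 := by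
      ext y; simp [kerK]
    rw [he]
    convert! h using 1
    ring
  | succ k ih =>
    have he : (fun x => kerK (k + 1 + 1) x x) =
        (fun x => kerK (k + 1) x x) + osc (k + 1) * osc (k + 1) := by
      ext y; simp [kerK, Finset.sum_range_succ]
    rw [he]
    convert! ih.add ((osc_hasDerivAt (k + 1) x).mul (osc_hasDerivAt_succ k x)) using 1
    ring

lemma kerK_nonneg (N : ℕ) (x : ℝ) : 0 ≤ kerK N x x :=
  Finset.sum_nonneg fun _ _ => mul_self_nonneg _

lemma kerK_le (n : ℕ) (x : ℝ) : kerK (n + 1) x x ≤ sN n := by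
  have hs := sN_pos n
  have i0 : Integrable (fun x => kerK (n + 1) x x) :=
    integrable_finset_sum _ fun k _ => osc_mul_integrable k k
  have i1 : Integrable (fun x => -(sN n * (osc n x * osc (n + 1) x))) :=
    ((osc_mul_integrable n (n + 1)).const_mul _).neg
  have ht := tendsto_zero_of_hasDerivAt_of_integrableOn_Iic (a := x)
    (fun y _ => kerK_hasDerivAt n y) i1.integrableOn i0.integrableOn
  have h := integral_Iic_of_hasDerivAt_of_tendsto' (a := x)
    (fun y _ => kerK_hasDerivAt n y) i1.integrableOn ht
  have i2 : Integrable (fun x => sN n / 2 * (osc n x * osc n x + osc (n + 1) x * osc (n + 1) x)) :=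
    ((osc_mul_integrable n n).add (osc_mul_integrable (n + 1) (n + 1))).const_mul _
  have h1 : ∫ y in Iic x, -(sN n * (osc n y * osc (n + 1) y)) ≤
      ∫ y in Iic x, sN n / 2 * (osc n y * osc n y + osc (n + 1) y * osc (n + 1) y) := by
    refine integral_mono i1.integrableOn i2.integrableOn fun y => ?_
    nlinarith [mul_nonneg hs.le (sq_nonneg (osc n y + osc (n + 1) y))]
  have h2 : ∫ y in Iic x, sN n / 2 * (osc n y * osc n y + osc (n + 1) y * osc (n + 1) y) ≤
      ∫ y, sN n / 2 * (osc n y * osc n y + osc (n + 1) y * osc (n + 1) y) := by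
    refine setIntegral_le_integral i2 (ae_of_all _ fun y => ?_)
    have := mul_self_nonneg (osc n y)
    have := mul_self_nonneg (osc (n + 1) y)
    simp only [Pi.zero_apply]
    positivity
  have h3 : ∫ y, sN n / 2 * (osc n y * osc n y + osc (n + 1) y * osc (n + 1) y) = sN n := by
    rw [integral_const_mul, integral_add (osc_mul_integrable n n)
      (osc_mul_integrable (n + 1) (n + 1)), osc_norm, osc_norm]
    ring
  linarith

lemma kerL_nonneg (N : ℕ) (y : ℝ) : 0 ≤ kerL N y y :=
  mul_nonneg (by positivity) (kerK_nonneg _ _)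

lemma kerL_le (N : ℕ) (hN : 1 ≤ N) (y : ℝ) : kerL N y y ≤ √2 := by
  obtain ⟨n, rfl⟩ : ∃ n, N = n + 1 := ⟨N - 1, by omega⟩
  have hp : 0 < √((n + 1 : ℕ) : ℝ) := Real.sqrt_pos.2 (by positivity)
  have h := kerK_le n (√((n + 1 : ℕ) : ℝ) * y)
  have hs : sN n = √2 * √((n + 1 : ℕ) : ℝ) := by
    rw [sN, Real.sqrt_mul (by norm_num)]; push_cast; rfl
  rw [kerL, inv_mul_le_iff₀ hp]
  linarith [mul_comm (√2) √((n + 1 : ℕ) : ℝ)]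

lemma tail_bound (N : ℕ) (hN : 1 ≤ N) (r : ℝ) (hr : 0 < r) (a : ℝ) :
    (∫ y in {y : ℝ | r / (N : ℝ) ≤ |a - y|}, kerL N y y / ((N : ℝ) * |a - y| ^ 2))
      ≤ 2 * √2 * π / r := by
  have hN' : (0 : ℝ) < N := by exact_mod_cast hN
  set ρ : ℝ := r / N with hρ
  have hρ0 : 0 < ρ := by positivity
  set g : ℝ → ℝ := fun y => 2 * √2 / (N * ρ ^ 2) * (1 + ((a - y) / ρ) ^ 2)⁻¹ with hg
  have i0 : Integrable (fun z : ℝ => (1 + (z / ρ) ^ 2)⁻¹) :=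
    integrable_inv_one_add_sq.comp_div hρ0.ne'
  have ig : Integrable g := (i0.comp_sub_left a).const_mul _
  have hgi : ∫ y, g y = 2 * √2 * π / r := by
    rw [hg, integral_const_mul, integral_sub_left_eq_self (fun z : ℝ => (1 + (z / ρ) ^ 2)⁻¹),
      Measure.integral_comp_div (fun z : ℝ => (1 + z ^ 2)⁻¹), integral_univ_inv_one_add_sq,
      abs_of_pos hρ0, smul_eq_mul, hρ]
    field_simp
  have hms : MeasurableSet {y : ℝ | ρ ≤ |a - y|} :=
    (isClosed_le continuous_const (by fun_prop)).measurableSet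
  rw [← hgi]
  refine le_trans ?_ (setIntegral_le_integral (s := {y : ℝ | ρ ≤ |a - y|}) ig
    (ae_of_all _ fun y => ?_))
  · refine integral_mono_of_nonneg (ae_of_all _ fun y => ?_) ig.integrableOn ?_
    · have := kerL_nonneg N y
      simp only [Pi.zero_apply]
      positivity
    · filter_upwards [ae_restrict_mem hms] with y hy
      have hy' : ρ ≤ |a - y| := hy
      have hz : 0 < |a - y| := hρ0.trans_le hy'
      have hsq : ρ ^ 2 ≤ |a - y| ^ 2 := by gcongr
      have e : g y = 2 * √2 / (N * (ρ ^ 2 + |a - y| ^ 2)) := by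
        simp only [hg, div_pow]
        rw [sq_abs]
        field_simp
      rw [e]
      have hL := kerL_le N hN y
      calc kerL N y y / (N * |a - y| ^ 2) ≤ √2 / (N * |a - y| ^ 2) := by gcongr
        _ = 2 * √2 / (N * (|a - y| ^ 2 + |a - y| ^ 2)) := by field_simp; ring
        _ ≤ _ := by gcongr
  · simp only [Pi.zero_apply, hg]
    positivity

/-- Variance estimate, diagonal part (Lemma 4.6, first part). -/
theorem variance_diagonal (θ : ℝ) (hθ1 : -Real.sqrt 2 < θ) (hθ2 : θ < Real.sqrt 2)
    (R : ℕ) (hR : 1 ≤ R) :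
    ∀ ε : ℝ, 0 < ε → ∃ r0 : ℝ, ∀ r : ℝ, r0 ≤ r → ∃ N0 : ℕ, ∀ N : ℕ, N0 ≤ N →
      ∀ x : ℝ, |x| < (R : ℝ) →
      (∫ y in {y : ℝ | r / (N : ℝ) ≤ |x / (N : ℝ) + θ - y|},
          kerL N y y / ((N : ℝ) * |x / (N : ℝ) + θ - y| ^ 2)) < ε := by
  intro ε hε
  have hC : 0 < 2 * √2 * π := by positivity
  refine ⟨2 * √2 * π / ε + 1, fun r hr => ⟨1, fun N hN x _ => ?_⟩⟩
  have h0 : 0 < 2 * √2 * π / ε := by positivity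
  have hr0 : 0 < r := by linarith
  refine (tail_bound N hN r hr0 (x / N + θ)).trans_lt ?_
  rw [div_lt_iff₀ hr0]
  have h1 : 2 * √2 * π / ε < r := by linarith
  rw [div_lt_iff₀ hε] at h1
  linarith
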